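/- Let Y be a topological space, let B ⊆ Y be a subset, and write ∂ := (Y × {0,1}) ∪ (B × [0,1]) ⊆ Y × [0,1]. Let f : Y × [0,1] → Y × [0,1] be a continuous map such that f(y,0) = (y,0) for all y ∈ Y, f(b,t) = (b,t) for all b ∈ B and t ∈ [0,1], and f maps Y × {1} into Y × {1}. Then f is homotopic to the identity map of Y × [0,1] through a homotopy H : (Y × [0,1]) × [0,1] → Y × [0,1] such that every stage H(·,s) maps ∂ into ∂ (i.e. the homotopy is through maps of pairs (Y × [0,1], ∂) → (Y × [0,1], ∂)), and which moreover fixes (Y × {0}) ∪ (B × [0,1]) pointwise at every stage. -/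

import Mathlib

noncomputable section

/-- For `B ⊆ Y`, the subset `∂ = (Y × {0,1}) ∪ (B × [0,1])` of `Y × [0,1]`. -/
def pairBoundary {Y : Type*} (B : Set Y) : Set (Y × (Set.Icc (0:ℝ) 1)) :=
  (Set.univ ×ˢ ({0, 1} : Set (Set.Icc (0:ℝ) 1))) ∪ (B ×ˢ Set.univ)

/-- Let `Y` be a topological space, `B ⊆ Y`, and `∂ = (Y × {0,1}) ∪ (B × [0,1])`.
If `f : Y × [0,1] → Y × [0,1]` is a continuous map with `f(y,0) = (y,0)` for all `y`,
`f(b,t) = (b,t)` for all `b ∈ B` and `t`, and `f` maps `Y × {1}` into `Y × {1}`, then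
`f` is homotopic to the identity through maps of pairs `(Y × [0,1], ∂) → (Y × [0,1], ∂)`,
by a homotopy fixing `(Y × {0}) ∪ (B × [0,1])` pointwise at every stage. -/
theorem homotopic_id_rel_pairBoundary {Y : Type*} [TopologicalSpace Y] (B : Set Y)
    (f : Y × (Set.Icc (0:ℝ) 1) → Y × (Set.Icc (0:ℝ) 1)) (hf : Continuous f)
    (h0 : ∀ y : Y, f (y, 0) = (y, 0))
    (hB : ∀ b ∈ B, ∀ t : Set.Icc (0:ℝ) 1, f (b, t) = (b, t))
    (h1 : ∀ y : Y, (f (y, 1)).2 = 1) :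
    ∃ H : (Y × (Set.Icc (0:ℝ) 1)) × (Set.Icc (0:ℝ) 1) → Y × (Set.Icc (0:ℝ) 1),
      Continuous H ∧
      (∀ p, H (p, 0) = f p) ∧
      (∀ p, H (p, 1) = p) ∧
      (∀ s : Set.Icc (0:ℝ) 1, ∀ p ∈ pairBoundary B, H (p, s) ∈ pairBoundary B) ∧
      (∀ s : Set.Icc (0:ℝ) 1, ∀ y : Y, H ((y, 0), s) = (y, 0)) ∧
      (∀ s : Set.Icc (0:ℝ) 1, ∀ b ∈ B, ∀ t : Set.Icc (0:ℝ) 1, H ((b, t), s) = (b, t)) := by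
  have hmem : ∀ q : (Y × (Set.Icc (0:ℝ) 1)) × (Set.Icc (0:ℝ) 1),
      (1 - (q.2 : ℝ)) * ((f q.1).2 : ℝ) + (q.2 : ℝ) * (q.1.2 : ℝ) ∈ Set.Icc (0:ℝ) 1 := by
    intro q
    have h := (convex_Icc (0:ℝ) 1) (f q.1).2.2 q.1.2.2
      (sub_nonneg.2 q.2.2.2) q.2.2.1 (by ring)
    simpa [smul_eq_mul] using h
  let H : (Y × (Set.Icc (0:ℝ) 1)) × (Set.Icc (0:ℝ) 1) → Y × (Set.Icc (0:ℝ) 1) := fun q =>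
    ((f (q.1.1, unitInterval.symm q.2 * q.1.2)).1, ⟨_, hmem q⟩)
  have hH0 : ∀ (s : Set.Icc (0:ℝ) 1) (y : Y), H ((y, 0), s) = (y, 0) := by
    intro s y
    refine Prod.ext ?_ (Subtype.ext ?_)
    · simp [H, h0]
    · simp [H, h0]
  have hHB : ∀ s : Set.Icc (0:ℝ) 1, ∀ b ∈ B, ∀ t : Set.Icc (0:ℝ) 1,
      H ((b, t), s) = (b, t) := by
    intro s b hb t
    refine Prod.ext ?_ (Subtype.ext ?_)
    · simp [H, hB b hb]
    · simp only [H, hB b hb]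
      ring
  refine ⟨H, ?_, ?_, ?_, ?_, hH0, hHB⟩
  · refine Continuous.prodMk ?_ (Continuous.subtype_mk ?_ _)
    · fun_prop
    · fun_prop
  · rintro ⟨y, t⟩
    refine Prod.ext ?_ (Subtype.ext ?_)
    · simp [H]
    · simp [H]
  · rintro ⟨y, t⟩
    refine Prod.ext ?_ (Subtype.ext ?_)
    · simp [H, h0]
    · simp [H]
  · rintro s ⟨y, t⟩ (⟨-, ht⟩ | ⟨hb, -⟩)
    · rcases ht with ht | ht
      · obtain rfl : t = 0 := ht
        rw [hH0]
        exact Or.inl ⟨trivial, Or.inl rfl⟩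
      · obtain rfl : t = 1 := ht
        refine Or.inl ⟨trivial, Or.inr (Subtype.ext ?_)⟩
        simp [H, h1]
    · rw [hHB s y hb t]
      exact Or.inr ⟨hb, trivial⟩
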